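/- Let N ≥ 1 and define F : ℝ^N → ℝ by F(u) = ‖softmax(u)‖₂² = Σ_{n=1}^N softmax(u)_n². Then the gradient of F vanishes at u, i.e. ∂F/∂u_i = 0 for all i ∈ {1, …, N}, if and only if all coordinates of u are equal. -/

import Mathlib

/-!
Writing `S = ∑ exp (u m)` and `Q = ∑ exp (u n) ^ 2`, the function is `Q / S ^ 2`, whose `i`-th
partial derivative is `2 * exp (u i) * (exp (u i) * S - Q) / S ^ 3`. Since `exp (u i)` and `S` are
positive, the gradient vanishes iff `exp (u i) * S = Q` for every `i`. The right-hand side does not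
depend on `i`, so injectivity of `exp` makes all coordinates equal; conversely, for equal
coordinates `Q = ∑ exp (u i) * exp (u n) = exp (u i) * S`.
-/

/-- The logistic softmax function. -/
noncomputable def softmax {N : ℕ} (z : Fin N → ℝ) : Fin N → ℝ :=
  fun n => Real.exp (z n) / ∑ m, Real.exp (z m)

lemma sum_exp_pos {N : ℕ} (hN : 1 ≤ N) (z : Fin N → ℝ) : 0 < ∑ m, Real.exp (z m) :=
  Finset.sum_pos (fun _ _ => Real.exp_pos _) ⟨⟨0, hN⟩, Finset.mem_univ _⟩

lemma fderiv_sq_norm_softmax_single {N : ℕ} (hN : 1 ≤ N) (u : Fin N → ℝ) (i : Fin N) :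
    fderiv ℝ (fun z : Fin N → ℝ => ∑ n, (softmax z n) ^ 2) u (Pi.single i 1) =
      2 * Real.exp (u i) * (Real.exp (u i) * ∑ m, Real.exp (u m) - ∑ n, Real.exp (u n) ^ 2) /
        (∑ m, Real.exp (u m)) ^ 3 := by
  have hS := (sum_exp_pos hN u).ne'
  have hF : (fun z : Fin N → ℝ => ∑ n, (softmax z n) ^ 2) =
      fun z => (∑ n, Real.exp (z n) ^ 2) * ((∑ m, Real.exp (z m)) ^ 2)⁻¹ := by
    funext z
    simp only [softmax, div_eq_mul_inv, Finset.sum_mul, mul_pow, inv_pow]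
  have he (n : Fin N) : HasFDerivAt (fun z : Fin N → ℝ => Real.exp (z n))
      (Real.exp (u n) • ContinuousLinearMap.proj (R := ℝ) (φ := fun _ : Fin N => ℝ) n) u :=
    (hasFDerivAt_apply n u).exp
  have hsum := HasFDerivAt.fun_sum (u := Finset.univ) fun n _ => he n
  have hsq := HasFDerivAt.fun_sum (u := Finset.univ) fun n _ => (he n).pow 2
  have hinv := (hasDerivAt_inv (pow_ne_zero 2 hS)).comp_hasFDerivAt u (hsum.pow 2)
  have h := hsq.mul hinv
  rw [hF]
  refine (congrArg (fun L => L (Pi.single i 1)) h.fderiv).trans ?_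
  simp [Pi.single_apply]
  field_simp
  ring

/-- Critical-point characterization from the proof of the paper's Lemma 1: the
gradient of F(u) = ‖softmax(u)‖₂² vanishes at u iff all coordinates of u are
equal. -/
theorem grad_sq_norm_softmax_eq_zero_iff_const
    (N : ℕ) (hN : 1 ≤ N) (u : Fin N → ℝ) :
    (∀ i, fderiv ℝ (fun z : Fin N → ℝ => ∑ n, (softmax z n) ^ 2) u (Pi.single i 1) = 0)
      ↔ ∀ i j, u i = u j := by
  have hS := (sum_exp_pos hN u).ne'
  have key (i : Fin N) :
      fderiv ℝ (fun z : Fin N → ℝ => ∑ n, (softmax z n) ^ 2) u (Pi.single i 1) = 0 ↔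
        Real.exp (u i) * ∑ m, Real.exp (u m) = ∑ n, Real.exp (u n) ^ 2 := by
    rw [fderiv_sq_norm_softmax_single hN, div_eq_zero_iff, or_iff_left (pow_ne_zero 3 hS),
      mul_eq_zero, or_iff_right (mul_ne_zero two_ne_zero (Real.exp_ne_zero _)), sub_eq_zero]
  simp only [key]
  constructor
  · intro h i j
    exact Real.exp_injective (mul_right_cancel₀ hS ((h i).trans (h j).symm))
  · intro h i
    rw [Finset.mul_sum]
    refine Finset.sum_congr rfl fun n _ => ?_
    rw [h i n, sq]
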